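/- Let n ≥ 2 be an integer and let f be a continuous probability density on [0,1] with f(q) > 0 for q ∈ (0,1]. Let p_1,…,p_n : [0,1]^n → [0,1] be measurable functions with ∑_{s=1}^n p_s(q) ≤ 1 for all q ∈ [0,1]^n, and for each s define the interim allocation P_s(x) = ∫_{[0,1]^{n-1}} p_s(x, q_{-s}) ∏_{k≠s} f(q_k) dq_{-s}. Then there exist integrable transfer functions t_1,…,t_n : [0,1]^n → ℝ such that the mechanism is incentive-compatible — i.e., writing T_s(x) = ∫_{[0,1]^{n-1}} t_s(x, q_{-s}) ∏_{k≠s} f(q_k) dq_{-s}, for every s, every x' ∈ [0,1] and almost every x ∈ [0,1] one has T_s(x) − x·P_s(x) ≥ T_s(x') − x·P_s(x') — if and only if for each s the function P_s agrees almost everywhere on [0,1] with a nonincreasing function. -/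

import Mathlib

open MeasureTheory Set

/-- The product measure on `[0,1]^n` (uniform on each coordinate); densities are
multiplied explicitly in the integrands below. -/
noncomputable def pimeas (n : ℕ) : Measure (Fin n → ℝ) :=
  Measure.pi fun _ => volume.restrict (Icc (0:ℝ) 1)

/-!
Subtracting the incentive constraints of two qualities `x < y` gives `(y - x) * (P y - P x) ≤ 0`,
so `P` is nonincreasing on the set of qualities that prefer truth to every report. Each report's
constraint is only assumed for almost every quality, but the menu `{(T x', P x')}` is separable and
each constraint is closed in the menu, so almost every quality satisfies all of them at once.

Conversely, if `P = R` almost everywhere with `R` nonincreasing, the rent `U x = ∫ y in x..b, R y`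
is convex with slope `-R`. Paying a seller who reports `y` the amount `T y = inf_x (U x + x * P y)`
guarantees `T y - x * P y ≤ U x` whatever `P y` is, and wherever `P y = R y` the infimum is
attained at `x = y`, so that truth earns exactly `U y`. These transfers depend on a seller's own
report only, hence they are their own interim expectation.
-/

section Screening

variable {μ : Measure ℝ} {S : Set ℝ} {T P R U : ℝ → ℝ}

/-- Incentive compatibility of the interim transfer `T` and the interim allocation `P` over the
report space `S`, up to `μ`-null sets of qualities: the null set of qualities that would rather
report `x'` may depend on `x'`. -/
def IncentiveCompatible (μ : Measure ℝ) (S : Set ℝ) (T P : ℝ → ℝ) : Prop :=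
  ∀ x' ∈ S, ∀ᵐ x ∂μ, T x' - x * P x' ≤ T x - x * P x

theorem IncentiveCompatible.ae_forall_report (h : IncentiveCompatible μ S T P) :
    ∀ᵐ x ∂μ, ∀ x' ∈ S, T x' - x * P x' ≤ T x - x * P x := by
  let menu : Set (ℝ × ℝ) := (fun x' => (T x', P x')) '' S
  obtain ⟨C, hC_menu, hC_countable, hC_dense⟩ :=
    (TopologicalSpace.IsSeparable.of_separableSpace menu).exists_countable_dense_subset
  have h_countable : ∀ᵐ x ∂μ, ∀ c ∈ C, c.1 - x * c.2 ≤ T x - x * P x := by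
    rw [ae_ball_iff hC_countable]
    intro c hc
    obtain ⟨x', hx', rfl⟩ := hC_menu hc
    exact h x' hx'
  filter_upwards [h_countable] with x hx x' hx'
  have h_closed : IsClosed {c : ℝ × ℝ | c.1 - x * c.2 ≤ T x - x * P x} :=
    isClosed_le (by fun_prop) continuous_const
  exact closure_minimal hx h_closed (hC_dense ⟨x', hx', rfl⟩)

theorem antitoneOn_of_forall_report_le
    (h : ∀ x ∈ S, ∀ x' ∈ S, T x' - x * P x' ≤ T x - x * P x) : AntitoneOn P S := by
  intro x hx y hy hxy
  rcases hxy.eq_or_lt with rfl | hlt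
  · exact le_rfl
  · have h_sum : (y - x) * P y ≤ (y - x) * P x := by linarith [h x hx y hy, h y hy x hx]
    exact le_of_mul_le_mul_left h_sum (sub_pos.2 hlt)

theorem IncentiveCompatible.exists_antitone_ae_eq (h : IncentiveCompatible μ S T P)
    (hμ : ∀ᵐ x ∂μ, x ∈ S) (hP : Bornology.IsBounded (P '' S)) :
    ∃ Q : ℝ → ℝ, Antitone Q ∧ P =ᵐ[μ] Q := by
  let truthful : Set ℝ := {x ∈ S | ∀ x' ∈ S, T x' - x * P x' ≤ T x - x * P x}
  have h_sub : truthful ⊆ S := sep_subset _ _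
  have h_anti : AntitoneOn P truthful :=
    antitoneOn_of_forall_report_le fun _ hx x' hx' => hx.2 x' (h_sub hx')
  have h_bdd : Bornology.IsBounded (P '' truthful) := hP.subset (image_mono h_sub)
  obtain ⟨Q, hQ, hPQ⟩ := h_anti.exists_antitone_extension h_bdd.bddBelow h_bdd.bddAbove
  refine ⟨Q, hQ, ?_⟩
  filter_upwards [h.ae_forall_report, hμ] with x hx hxS using hPQ ⟨hxS, hx⟩

/-- The largest transfer for the report `y` with which no quality `x ∈ S` gets more than `U x` by
reporting `y`, the report being allocated `P y`; it implements the rent schedule `U`. The infimum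
is a junk value unless `S` is nonempty and the set is bounded below. -/
noncomputable def transferOfRent (S : Set ℝ) (U P : ℝ → ℝ) (y : ℝ) : ℝ :=
  sInf ((fun x => U x + x * P y) '' S)

theorem transferOfRent_sub_le (hS : IsCompact S) (hU : ContinuousOn U S) {x : ℝ} (hx : x ∈ S)
    (y : ℝ) : transferOfRent S U P y - x * P y ≤ U x := by
  have h_bdd : BddBelow ((fun x => U x + x * P y) '' S) :=
    hS.bddBelow_image (hU.add (by fun_prop))
  exact sub_le_iff_le_add.2 (csInf_le h_bdd (mem_image_of_mem _ hx))

theorem transferOfRent_eq {y : ℝ} (hy : y ∈ S) (h : ∀ x ∈ S, U y + y * P y ≤ U x + x * P y) :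
    transferOfRent S U P y = U y + y * P y :=
  IsLeast.csInf_eq ⟨mem_image_of_mem _ hy, forall_mem_image.2 h⟩

theorem incentiveCompatible_transferOfRent (hS : IsCompact S) (hU : ContinuousOn U S)
    (hT : ∀ᵐ x ∂μ, x ∈ S ∧ transferOfRent S U P x = U x + x * P x) :
    IncentiveCompatible μ S (transferOfRent S U P) P := by
  intro x' _
  filter_upwards [hT] with x ⟨hx, hTx⟩
  calc transferOfRent S U P x' - x * P x' ≤ U x := transferOfRent_sub_le hS hU hx x'
    _ = transferOfRent S U P x - x * P x := by rw [hTx, add_sub_cancel_right]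

theorem sub_mul_le_intervalIntegral_of_antitoneOn {x y : ℝ} (hR : AntitoneOn R (uIcc x y)) :
    (y - x) * R y ≤ ∫ z in x..y, R z := by
  have h_int : IntervalIntegrable R volume x y := hR.intervalIntegrable
  rcases le_total x y with hxy | hyx
  · simpa using intervalIntegral.integral_mono_on hxy intervalIntegrable_const h_int
      fun z hz => hR (Icc_subset_uIcc hz) right_mem_uIcc hz.2
  · have h_le : ∫ z in y..x, R z ≤ (x - y) * R y := by
      simpa using intervalIntegral.integral_mono_on hyx h_int.symm intervalIntegrable_const
        fun z hz => hR right_mem_uIcc (Icc_subset_uIcc' hz) hz.1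
    rw [intervalIntegral.integral_symm]
    linarith

/-- The information rent of quality `x` under the interim allocation `R`, normalised to vanish at
the quality `b`. -/
noncomputable def informationRent (R : ℝ → ℝ) (b x : ℝ) : ℝ :=
  ∫ y in x..b, R y

theorem continuous_informationRent (hR : Antitone R) (b : ℝ) :
    Continuous (informationRent R b) := by
  have h_eq : informationRent R b = fun x => -∫ y in b..x, R y :=
    funext fun x => intervalIntegral.integral_symm b x
  exact h_eq ▸ (intervalIntegral.continuous_primitive (fun _ _ => hR.intervalIntegrable) b).neg

theorem informationRent_add_mul_le (hR : Antitone R) (b x y : ℝ) :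
    informationRent R b y + y * R y ≤ informationRent R b x + x * R y := by
  have h_split : (∫ z in x..y, R z) + informationRent R b y = informationRent R b x :=
    intervalIntegral.integral_add_adjacent_intervals hR.intervalIntegrable hR.intervalIntegrable
  linarith [sub_mul_le_intervalIntegral_of_antitoneOn (hR.antitoneOn (uIcc x y))]

theorem integrable_continuousOn_mul_of_ae_mem (hS : IsCompact S) (hμ : ∀ᵐ x ∂μ, x ∈ S)
    {g f : ℝ → ℝ} (hg : ContinuousOn g S) (hf : Integrable f μ) :
    Integrable (fun x => g x * f x) μ := by
  rw [← Measure.restrict_eq_self_of_ae_mem hμ] at hf ⊢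
  exact IntegrableOn.continuousOn_mul hg hf hS

theorem integrable_informationRent_add_mul_mul {a b : ℝ} (hμ : ∀ᵐ x ∂μ, x ∈ Icc a b)
    (hR : Antitone R) (c : ℝ) {f : ℝ → ℝ} (hf : Integrable f μ) :
    Integrable (fun x => (informationRent R c x + x * R x) * f x) μ := by
  have h_mul {g h : ℝ → ℝ} (hg : Continuous g) (hh : Integrable h μ) :
      Integrable (fun x => g x * h x) μ :=
    integrable_continuousOn_mul_of_ae_mem isCompact_Icc hμ hg.continuousOn hh
  have h_Rf : Integrable (fun x => R x * f x) μ := by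
    refine hf.bdd_mul (c := max |R b| |R a|) hR.measurable.aestronglyMeasurable ?_
    filter_upwards [hμ] with x hx
    exact abs_le_max_abs_abs (hR hx.2) (hR hx.1)
  simpa only [add_mul, mul_assoc] using!
    (h_mul (continuous_informationRent hR c) hf).add (h_mul continuous_id h_Rf)

theorem exists_integrable_incentiveCompatible {a b : ℝ} (hμ : ∀ᵐ x ∂μ, x ∈ Icc a b)
    {Q : ℝ → ℝ} (hQ : AntitoneOn Q (Icc a b)) (hPQ : P =ᵐ[μ] Q) {f : ℝ → ℝ}
    (hf : Integrable f μ) :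
    ∃ T : ℝ → ℝ, Integrable (fun x => T x * f x) μ ∧ IncentiveCompatible μ (Icc a b) T P := by
  obtain ⟨R, hR, hQR⟩ := hQ.exists_antitone_extension
    (bddBelow_Icc.mono hQ.image_Icc_subset) (bddAbove_Icc.mono hQ.image_Icc_subset)
  have hPR : P =ᵐ[μ] R := by
    filter_upwards [hPQ, hμ] with x hPx hx using hPx.trans (hQR hx)
  let U := informationRent R b
  have hT : ∀ᵐ x ∂μ, x ∈ Icc a b ∧ transferOfRent (Icc a b) U P x = U x + x * P x := by
    filter_upwards [hμ, hPR] with y hy hPy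
    exact ⟨hy, transferOfRent_eq hy fun x _ => hPy ▸ informationRent_add_mul_le hR b x y⟩
  refine ⟨transferOfRent (Icc a b) U P, ?_, incentiveCompatible_transferOfRent isCompact_Icc
    (continuous_informationRent hR b).continuousOn hT⟩
  refine (integrable_informationRent_add_mul_mul hμ hR b hf).congr ?_
  filter_upwards [hT, hPR] with x hTx hPx
  rw [hTx.2, hPx]

end Screening

section Interim

variable {ι : Type*} [Fintype ι] [DecidableEq ι] {X : ι → Type*} {s : ι}

theorem mul_prod_erase_eq_prod_update {M : Type*} [CommMonoid M] (f : (i : ι) → X i → M)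
    (g : X s → M) (q : (i : ι) → X i) :
    g (q s) * ∏ k ∈ Finset.univ.erase s, f k (q k) = ∏ k, Function.update f s g k (q k) := by
  simp_rw [Function.apply_update (fun k (h : X k → M) => h (q k)),
    Finset.prod_update_of_mem (Finset.mem_univ s), Finset.sdiff_singleton_eq_erase]

variable [∀ i, MeasurableSpace (X i)] {μ : (i : ι) → Measure (X i)} {f : (i : ι) → X i → ℝ}

/-- The interim expectation of `φ` for agent `s` of type `x`, the types of the other agents being
independent with densities `f k` relative to `μ k`. The integral runs over the own coordinate too,
on which the integrand does not depend, so this is the intended quantity when `μ s` has mass one. -/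
noncomputable def interim (μ : (i : ι) → Measure (X i)) (f : (i : ι) → X i → ℝ) (s : ι)
    (φ : ((i : ι) → X i) → ℝ) (x : X s) : ℝ :=
  ∫ q, φ (Function.update q s x) * ∏ k ∈ Finset.univ.erase s, f k (q k) ∂Measure.pi μ

variable [∀ i, SigmaFinite (μ i)]

theorem integrable_mul_prod_erase {g : X s → ℝ} (hg : Integrable g (μ s))
    (hf : ∀ k, k ≠ s → Integrable (f k) (μ k)) :
    Integrable (fun q => g (q s) * ∏ k ∈ Finset.univ.erase s, f k (q k)) (Measure.pi μ) := by
  simp_rw [mul_prod_erase_eq_prod_update]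
  refine Integrable.fintype_prod_dep fun k => ?_
  rcases eq_or_ne k s with rfl | hk
  · rwa [Function.update_self]
  · rw [Function.update_of_ne hk]
    exact hf k hk

theorem integral_mul_prod_erase (g : X s → ℝ) :
    ∫ q, g (q s) * ∏ k ∈ Finset.univ.erase s, f k (q k) ∂Measure.pi μ =
      (∫ x, g x ∂μ s) * ∏ k ∈ Finset.univ.erase s, ∫ x, f k x ∂μ k := by
  simp_rw [mul_prod_erase_eq_prod_update, integral_fintype_prod_eq_prod,
    Function.apply_update (fun k (h : X k → ℝ) => ∫ x, h x ∂μ k),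
    Finset.prod_update_of_mem (Finset.mem_univ s), Finset.sdiff_singleton_eq_erase]

theorem interim_comp_eval [IsProbabilityMeasure (μ s)]
    (hf : ∀ k, k ≠ s → ∫ x, f k x ∂μ k = 1) (T : X s → ℝ) :
    interim μ f s (fun q => T (q s)) = T := by
  funext x
  have h_prod : ∏ k ∈ Finset.univ.erase s, ∫ y, f k y ∂μ k = 1 :=
    Finset.prod_eq_one fun k hk => hf k (Finset.ne_of_mem_erase hk)
  simpa [interim, h_prod] using integral_mul_prod_erase (μ := μ) (f := f) fun _ : X s => T x

theorem isBounded_range_interim [IsFiniteMeasure (μ s)]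
    (hf : ∀ k, k ≠ s → Integrable (f k) (μ k)) {φ : ((i : ι) → X i) → ℝ} {C : ℝ}
    (hφ : ∀ q, |φ q| ≤ C) :
    Bornology.IsBounded (range (interim μ f s φ)) := by
  let density : ((i : ι) → X i) → ℝ := fun q => ∏ k ∈ Finset.univ.erase s, f k (q k)
  have h_density : Integrable density (Measure.pi μ) := by
    simpa using integrable_mul_prod_erase (integrable_const (μ := μ s) (1 : ℝ)) hf
  refine isBounded_iff_forall_norm_le.2 ⟨∫ q, C * ‖density q‖ ∂Measure.pi μ, ?_⟩
  rintro _ ⟨x, rfl⟩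
  refine norm_integral_le_of_norm_le (h_density.norm.const_mul C) (.of_forall fun q => ?_)
  rw [norm_mul]
  exact mul_le_mul_of_nonneg_right (hφ _) (norm_nonneg _)

end Interim

theorem stmt_0_general {ι : Type*} [Fintype ι] [DecidableEq ι] {a b : ℝ}
    {μ : ι → Measure ℝ} [∀ s, IsProbabilityMeasure (μ s)] (hμ : ∀ s, ∀ᵐ x ∂μ s, x ∈ Icc a b)
    {f : ι → ℝ → ℝ} (hf_one : ∀ s, ∫ x, f s x ∂μ s = 1)
    {P : ι → ℝ → ℝ} (hP : ∀ s, Bornology.IsBounded (P s '' Icc a b)) :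
    (∃ t : ι → (ι → ℝ) → ℝ,
      (∀ s, Integrable (fun q => t s q * ∏ k, f k (q k)) (Measure.pi μ)) ∧
      ∀ s, IncentiveCompatible (μ s) (Icc a b) (interim μ f s (t s)) (P s)) ↔
    ∀ s, ∃ Q : ℝ → ℝ, AntitoneOn Q (Icc a b) ∧ P s =ᵐ[μ s] Q := by
  constructor
  · rintro ⟨t, -, h_ic⟩ s
    obtain ⟨Q, hQ, hPQ⟩ := (h_ic s).exists_antitone_ae_eq (hμ s) (hP s)
    exact ⟨Q, hQ.antitoneOn _, hPQ⟩
  · intro h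
    have hf (s : ι) : Integrable (f s) (μ s) := integrable_of_integral_eq_one (hf_one s)
    have h_own (s : ι) : ∃ T : ℝ → ℝ, Integrable (fun x => T x * f s x) (μ s) ∧
        IncentiveCompatible (μ s) (Icc a b) T (P s) := by
      obtain ⟨Q, hQ, hPQ⟩ := h s
      exact exists_integrable_incentiveCompatible (hμ s) hQ hPQ (hf s)
    choose T hT_int hT_ic using h_own
    refine ⟨fun s q => T s (q s), fun s => ?_, fun s => ?_⟩
    · have h_int := integrable_mul_prod_erase (hT_int s) fun k _ => hf k
      simpa only [mul_assoc, Finset.mul_prod_erase _ (fun k => f k _) (Finset.mem_univ s)]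
        using h_int
    · rw [interim_comp_eval fun k _ => hf_one k]
      exact hT_ic s

/-- For a feasible allocation rule `p` with interim allocations `P s`,
there exist integrable transfers making the mechanism incentive-compatible if and only
if each interim allocation `P s` agrees almost everywhere on `[0,1]` with a
nonincreasing function. -/
theorem stmt_0 (n : ℕ) (hn : 2 ≤ n)
    (f : ℝ → ℝ)
    (hf_cont : ContinuousOn f (Icc 0 1))
    (hf_nonneg : ∀ q ∈ Icc (0:ℝ) 1, 0 ≤ f q)
    (hf_pos : ∀ q ∈ Ioc (0:ℝ) 1, 0 < f q)
    (hf_prob : (∫ q in (0:ℝ)..1, f q) = 1)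
    (p : Fin n → (Fin n → ℝ) → ℝ)
    (hp_meas : ∀ s, Measurable (p s))
    (hp_mem : ∀ s q, p s q ∈ Icc (0:ℝ) 1)
    (hp_sum : ∀ q : Fin n → ℝ, (∀ k, q k ∈ Icc (0:ℝ) 1) → (∑ s, p s q) ≤ 1)
    (P : Fin n → ℝ → ℝ)
    (hP : ∀ s x, P s x =
      ∫ q : Fin n → ℝ,
        p s (Function.update q s x) * ∏ k ∈ Finset.univ.erase s, f (q k) ∂(pimeas n)) :
    (∃ t : Fin n → (Fin n → ℝ) → ℝ,
      (∀ s, Integrable (fun q => t s q * ∏ k, f (q k)) (pimeas n)) ∧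
      (∀ s : Fin n, ∀ x' ∈ Icc (0:ℝ) 1,
        ∀ᵐ x ∂(volume.restrict (Icc (0:ℝ) 1)),
          (∫ q : Fin n → ℝ,
              t s (Function.update q s x') * ∏ k ∈ Finset.univ.erase s, f (q k) ∂(pimeas n))
            - x * P s x'
          ≤ (∫ q : Fin n → ℝ,
              t s (Function.update q s x) * ∏ k ∈ Finset.univ.erase s, f (q k) ∂(pimeas n))
            - x * P s x))
    ↔ ∀ s : Fin n, ∃ Q : ℝ → ℝ, AntitoneOn Q (Icc (0:ℝ) 1) ∧
        ∀ᵐ x ∂(volume.restrict (Icc (0:ℝ) 1)), P s x = Q x := by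
  have : IsProbabilityMeasure (volume.restrict (Icc (0 : ℝ) 1)) := ⟨by simp⟩
  have hf_one : ∫ q in Icc (0 : ℝ) 1, f q = 1 := by
    rw [integral_Icc_eq_integral_Ioc, ← intervalIntegral.integral_of_le zero_le_one, hf_prob]
  obtain rfl : P = fun s => interim (fun _ => volume.restrict (Icc 0 1)) (fun _ => f) s (p s) :=
    funext₂ hP
  have hp_abs (s : Fin n) (q : Fin n → ℝ) : |p s q| ≤ 1 :=
    abs_le.2 ⟨neg_one_lt_zero.le.trans (hp_mem s q).1, (hp_mem s q).2⟩
  have hP_bdd (s : Fin n) : Bornology.IsBounded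
      (range (interim (fun _ => volume.restrict (Icc 0 1)) (fun _ => f) s (p s))) :=
    isBounded_range_interim (fun _ _ => integrable_of_integral_eq_one hf_one) (hp_abs s)
  exact stmt_0_general (fun _ => ae_restrict_mem measurableSet_Icc) (fun _ => hf_one)
    fun s => (hP_bdd s).subset (image_subset_range _ _)
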